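/- If f is a Lorentzian polynomial of degree d, then for any v₁ ∈ ℝⁿ and v₂,…,v_d in the nonnegative orthant, F_f(v₁,v₂,v₃,…,v_d)² ≥ F_f(v₁,v₁,v₃,…,v_d)·F_f(v₂,v₂,v₃,…,v_d), where F_f is the complete polarization (symmetric multilinear form) of f. -/

import Mathlib

open MvPolynomial Matrix

noncomputable def polyHessian {n : ℕ} (f : MvPolynomial (Fin n) ℝ) (w : Fin n → ℝ) :
    Matrix (Fin n) (Fin n) ℝ :=
  Matrix.of fun i j => eval w (pderiv i (pderiv j f))

def ExactlyOnePosEig {n : ℕ} (A : Matrix (Fin n) (Fin n) ℝ) : Prop :=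
  ∃ hA : A.IsHermitian, (Finset.univ.filter fun i => 0 < hA.eigenvalues i).card = 1

def AtMostOnePosEig {n : ℕ} (A : Matrix (Fin n) (Fin n) ℝ) : Prop :=
  ∃ hA : A.IsHermitian, (Finset.univ.filter fun i => 0 < hA.eigenvalues i).card ≤ 1

def MConvexSet {n : ℕ} (J : Set (Fin n →₀ ℕ)) : Prop :=
  ∀ α ∈ J, ∀ β ∈ J, ∀ i : Fin n, β i < α i →
    ∃ j : Fin n, α j < β j ∧ α - Finsupp.single i 1 + Finsupp.single j 1 ∈ J

def LorBase {n : ℕ} (d : ℕ) (f : MvPolynomial (Fin n) ℝ) : Prop :=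
  f.IsHomogeneous d ∧ (∀ α, 0 ≤ f.coeff α) ∧ MConvexSet {α | f.coeff α ≠ 0}

def IsLorentzian {n : ℕ} : ℕ → MvPolynomial (Fin n) ℝ → Prop
  | 0, f => LorBase 0 f
  | 1, f => LorBase 1 f
  | 2, f => LorBase 2 f ∧ AtMostOnePosEig (polyHessian f 0)
  | d + 3, f => LorBase (d + 3) f ∧ ∀ i, IsLorentzian (d + 2) (pderiv i f)

noncomputable def polarForm {n : ℕ} (d : ℕ) (f : MvPolynomial (Fin n) ℝ)
    (v : Fin d → Fin n → ℝ) : ℝ :=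
  ((d.factorial : ℝ))⁻¹ *
    iteratedFDeriv ℝ d (fun x : Fin d → ℝ => eval (fun j => ∑ i, x i * v i j) f) 0
      (fun i => Pi.single i 1)

/-!
For positive directions the Hessian `A` of a mixed derivative of `f` has at most one positive
eigenvalue, by induction on the degree. Write `A = ∑ k, w k • T k`, where `w` is the first direction
and `T k` is the corresponding Hessian for `∂f/∂x_k`. By symmetry of third derivatives `T k *ᵥ w` is
the `k`-th row of `A`, so the reverse Cauchy–Schwarz inequality for `T k` at `w` bounds
`xᵀ (T k) x` by `(A x)_k² / (A w)_k`, and summation over `k` yields the Bochner type inequality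
`xᵀ A x ≤ ∑ k, w_k (A x)_k² / (A w)_k`.

Let `D` be the diagonal matrix with `D w = A w` and `L = D - A ≥ 0` the Laplacian. M-convexity of
the support of `f` makes the graph of `A` connected, apart from isolated vertices, so for `x ⟂ A w`
one can solve `L v = D x`. The Bochner inequality at `v` says `vᵀ L v ≤ xᵀ D x`, and Cauchy–Schwarz
for `L` gives `(xᵀ D x)² = (xᵀ L v)² ≤ (xᵀ L x) (xᵀ D x)`, that is, `xᵀ A x ≤ 0`.

A form which is nonpositive on a hyperplane satisfies the reverse Cauchy–Schwarz inequality, and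
nonnegative directions are limits of positive ones.
-/

section QuadraticForms

variable {ι R K : Type*} [Fintype ι]

/-- The quadratic form of `A` is nonpositive on a hyperplane, namely the orthogonal complement of
`a` (or on the whole space, if `a = 0`). For real symmetric matrices this means having at most one
positive eigenvalue. -/
def IsNegSemidefOnHyperplane [Semiring R] [LE R] (A : Matrix ι ι R) : Prop :=
  ∃ a : ι → R, ∀ t, a ⬝ᵥ t = 0 → t ⬝ᵥ A *ᵥ t ≤ 0

theorem dotProduct_mulVec_comm_of_isSymm [CommSemiring R] {A : Matrix ι ι R}
    (hA : A.IsSymm) (x y : ι → R) : x ⬝ᵥ A *ᵥ y = y ⬝ᵥ A *ᵥ x := by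
  rw [dotProduct_mulVec, ← mulVec_transpose, hA.eq, dotProduct_comm]

theorem IsNegSemidefOnHyperplane.dotProduct_mulVec_mul_le_sq [Field K] [LinearOrder K]
    [IsStrictOrderedRing K] {A : Matrix ι ι K} (h : IsNegSemidefOnHyperplane A) (hA : A.IsSymm)
    (x : ι → K) {y : ι → K} (hy : 0 ≤ y ⬝ᵥ A *ᵥ y) :
    (x ⬝ᵥ A *ᵥ x) * (y ⬝ᵥ A *ᵥ y) ≤ (x ⬝ᵥ A *ᵥ y) ^ 2 := by
  obtain ⟨a, ha⟩ := h
  rcases hy.eq_or_lt with hy | hy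
  · rw [← hy, mul_zero]
    positivity
  have hay : a ⬝ᵥ y ≠ 0 := fun h => (ha y h).not_gt hy
  have hproj : a ⬝ᵥ (x - (a ⬝ᵥ x / a ⬝ᵥ y) • y) = 0 := by
    rw [dotProduct_sub, dotProduct_smul, smul_eq_mul, div_mul_cancel₀ _ hay, sub_self]
  have hle := ha _ hproj
  simp only [mulVec_sub, mulVec_smul, dotProduct_sub, sub_dotProduct, dotProduct_smul,
    smul_dotProduct, smul_eq_mul, dotProduct_mulVec_comm_of_isSymm hA y x] at hle
  nlinarith [sq_nonneg (a ⬝ᵥ x / a ⬝ᵥ y * (y ⬝ᵥ A *ᵥ y) - x ⬝ᵥ A *ᵥ y),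
    mul_nonpos_of_nonneg_of_nonpos hy.le hle]

theorem exists_mulVec_eq_of_forall_dotProduct_eq_zero [Field K] {A : Matrix ι ι K}
    (hA : A.IsSymm) {b : ι → K} (hb : ∀ y, A *ᵥ y = 0 → y ⬝ᵥ b = 0) : ∃ v, A *ᵥ v = b := by
  classical
  have hmem : dotProductEquiv K ι b ∈ A.toLin'.ker.dualAnnihilator := by
    rw [Submodule.mem_dualAnnihilator]
    intro y hy
    simpa [dotProduct_comm] using hb y (by simpa using hy)
  rw [← LinearMap.range_dualMap_eq_dualAnnihilator_ker] at hmem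
  obtain ⟨φ, hφ⟩ := hmem
  obtain ⟨v, rfl⟩ := (dotProductEquiv K ι).surjective φ
  refine ⟨v, dotProduct_eq _ _ fun u => ?_⟩
  have hu : v ⬝ᵥ A *ᵥ u = b ⬝ᵥ u := by simpa using LinearMap.congr_fun hφ u
  rw [← hu, dotProduct_comm, dotProduct_mulVec_comm_of_isSymm hA]

variable [Semiring R] [PartialOrder R] [IsOrderedRing R]

theorem mulVec_nonneg {A : Matrix ι ι R} (hA : ∀ i j, 0 ≤ A i j) {w : ι → R}
    (hw : ∀ i, 0 ≤ w i) (i : ι) : 0 ≤ (A *ᵥ w) i :=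
  Finset.sum_nonneg fun j _ => mul_nonneg (hA i j) (hw j)

theorem row_eq_zero_of_mulVec_eq_zero [NoZeroDivisors R] {A : Matrix ι ι R} {i : ι}
    (hA : ∀ j, 0 ≤ A i j) {w : ι → R} (hw : ∀ i, 0 < w i) (h : (A *ᵥ w) i = 0) : A i = 0 := by
  ext j
  have hj := (Finset.sum_eq_zero_iff_of_nonneg fun j _ => mul_nonneg (hA j) (hw j).le).1 h j
    (Finset.mem_univ j)
  exact (mul_eq_zero.1 hj).resolve_right (hw j).ne'

end QuadraticForms

theorem dotProduct_mulVec_eq_sum_eigenvalues {ι : Type*} [Fintype ι] [DecidableEq ι]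
    {A : Matrix ι ι ℝ} (hA : A.IsHermitian) (x : ι → ℝ) :
    x ⬝ᵥ A *ᵥ x = ∑ k, hA.eigenvalues k * (⇑(hA.eigenvectorBasis k) ⬝ᵥ x) ^ 2 := by
  have hparseval := hA.eigenvectorBasis.sum_inner_mul_inner (WithLp.toLp 2 x)
    (WithLp.toLp 2 (A *ᵥ x))
  simp only [EuclideanSpace.inner_eq_star_dotProduct, star_trivial] at hparseval
  rw [dotProduct_comm, ← hparseval]
  refine Finset.sum_congr rfl fun k _ => ?_
  rw [dotProduct_comm (A *ᵥ x), dotProduct_mulVec_comm_of_isSymm (isHermitian_iff_isSymm.1 hA),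
    hA.mulVec_eigenvectorBasis, dotProduct_smul, dotProduct_comm x, smul_eq_mul]
  ring

theorem AtMostOnePosEig.isNegSemidefOnHyperplane {n : ℕ} {A : Matrix (Fin n) (Fin n) ℝ}
    (h : AtMostOnePosEig A) : IsNegSemidefOnHyperplane A := by
  obtain ⟨hA, hcard⟩ := h
  rcases isEmpty_or_nonempty (Fin n) with _ | _
  · exact ⟨0, fun t _ => by simp [dotProduct]⟩
  obtain ⟨k, hk⟩ := Finset.card_le_one_iff_subset_singleton.1 hcard
  refine ⟨hA.eigenvectorBasis k, fun t ht => ?_⟩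
  rw [dotProduct_mulVec_eq_sum_eigenvalues hA]
  refine Finset.sum_nonpos fun j _ => ?_
  rcases eq_or_ne j k with rfl | hjk
  · rw [ht, zero_pow two_ne_zero, mul_zero]
  · have hj : hA.eigenvalues j ≤ 0 := by
      by_contra! hpos
      exact hjk (Finset.mem_singleton.1 (hk (Finset.mem_filter.2 ⟨Finset.mem_univ j, hpos⟩)))
    exact mul_nonpos_of_nonpos_of_nonneg hj (sq_nonneg _)

/-- The graph with edges `{i, j}` for `A i j ≠ 0` has at most one connected component containing
an edge. Zero rows of `A` are isolated vertices and are ignored. -/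
def HasConnectedSupport {ι R : Type*} [Zero R] (A : Matrix ι ι R) : Prop :=
  ∀ i j, A i ≠ 0 → A j ≠ 0 → Relation.ReflTransGen (fun i j => A i j ≠ 0) i j

section WeightedLaplacian

variable {ι K : Type*} [Fintype ι] [Field K]

/-- The degree of the vertex `i` in the graph with edge weights `A i j * w i * w j`, divided by
`w i ^ 2`. -/
def weightedDegree (A : Matrix ι ι K) (w : ι → K) (i : ι) : K :=
  (A *ᵥ w) i / w i

variable [DecidableEq ι]

/-- The Laplacian of the graph with edge weights `A i j * w i * w j`, in the coordinates in which
`w`, instead of the constant function `1`, is harmonic. -/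
def weightedLaplacian (A : Matrix ι ι K) (w : ι → K) : Matrix ι ι K :=
  diagonal (weightedDegree A w) - A

theorem weightedLaplacian_mulVec (A : Matrix ι ι K) (w x : ι → K) :
    weightedLaplacian A w *ᵥ x = weightedDegree A w * x - A *ᵥ x := by
  ext i
  simp only [weightedLaplacian, sub_mulVec, Pi.sub_apply, Pi.mul_apply, mulVec_diagonal]

theorem isSymm_weightedLaplacian {A : Matrix ι ι K} (hA : A.IsSymm) (w : ι → K) :
    (weightedLaplacian A w).IsSymm :=
  (isSymm_diagonal _).sub hA

theorem two_mul_dotProduct_weightedLaplacian_mulVec {A : Matrix ι ι K} (hA : A.IsSymm)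
    {w : ι → K} (hw : ∀ i, w i ≠ 0) (x : ι → K) :
    2 * (x ⬝ᵥ weightedLaplacian A w *ᵥ x) =
      ∑ i, ∑ j, A i j * (w i * w j) * (x i / w i - x j / w j) ^ 2 := by
  have hdegree : x ⬝ᵥ (weightedDegree A w * x) = ∑ i, ∑ j, A i j * (w j / w i * x i ^ 2) := by
    simp only [dotProduct, Pi.mul_apply, weightedDegree, mulVec, Finset.sum_div, Finset.sum_mul,
      Finset.mul_sum]
    exact Finset.sum_congr rfl fun i _ => Finset.sum_congr rfl fun j _ => by ring
  have hdegree' : x ⬝ᵥ (weightedDegree A w * x) = ∑ i, ∑ j, A i j * (w i / w j * x j ^ 2) := by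
    rw [hdegree, Finset.sum_comm]
    simp only [hA.apply]
  have hadj : x ⬝ᵥ A *ᵥ x = ∑ i, ∑ j, A i j * (x i * x j) := by
    simp only [dotProduct, mulVec, Finset.mul_sum]
    exact Finset.sum_congr rfl fun i _ => Finset.sum_congr rfl fun j _ => by ring
  have hexpand : ∀ i j, A i j * (w i * w j) * (x i / w i - x j / w j) ^ 2 =
      A i j * (w j / w i * x i ^ 2) + A i j * (w i / w j * x j ^ 2) -
        2 * (A i j * (x i * x j)) := by
    intro i j
    have := hw i
    have := hw j
    field_simp
    ring
  simp only [hexpand, Finset.sum_sub_distrib, Finset.sum_add_distrib, ← Finset.mul_sum,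
    ← hdegree, ← hdegree', ← hadj, weightedLaplacian_mulVec, dotProduct_sub]
  ring

variable [LinearOrder K] [IsStrictOrderedRing K] {A : Matrix ι ι K} {w : ι → K}

theorem dotProduct_weightedLaplacian_mulVec_nonneg (hA : A.IsSymm) (hA₀ : ∀ i j, 0 ≤ A i j)
    (hw : ∀ i, 0 < w i) (x : ι → K) : 0 ≤ x ⬝ᵥ weightedLaplacian A w *ᵥ x := by
  have h := two_mul_dotProduct_weightedLaplacian_mulVec hA (fun i => (hw i).ne') x
  have hsum : 0 ≤ ∑ i, ∑ j, A i j * (w i * w j) * (x i / w i - x j / w j) ^ 2 :=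
    Finset.sum_nonneg fun i _ => Finset.sum_nonneg fun j _ =>
      mul_nonneg (mul_nonneg (hA₀ i j) (mul_pos (hw i) (hw j)).le) (sq_nonneg _)
  linarith

theorem div_eq_div_of_weightedLaplacian_mulVec_eq_zero (hA : A.IsSymm)
    (hA₀ : ∀ i j, 0 ≤ A i j) (hw : ∀ i, 0 < w i) {y : ι → K}
    (hy : weightedLaplacian A w *ᵥ y = 0) {i j : ι} (hij : A i j ≠ 0) :
    y i / w i = y j / w j := by
  have hterm : ∀ i j, 0 ≤ A i j * (w i * w j) * (y i / w i - y j / w j) ^ 2 := fun i j =>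
    mul_nonneg (mul_nonneg (hA₀ i j) (mul_pos (hw i) (hw j)).le) (sq_nonneg _)
  have hsum := two_mul_dotProduct_weightedLaplacian_mulVec hA (fun i => (hw i).ne') y
  rw [hy, dotProduct_zero, mul_zero, eq_comm,
    Finset.sum_eq_zero_iff_of_nonneg fun i _ => Finset.sum_nonneg fun j _ => hterm i j] at hsum
  have hzero := (Finset.sum_eq_zero_iff_of_nonneg fun j _ => hterm i j).1
    (hsum i (Finset.mem_univ i)) j (Finset.mem_univ j)
  exact sub_eq_zero.1 (pow_eq_zero_iff two_ne_zero |>.1 ((mul_eq_zero.1 hzero).resolve_left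
    (mul_ne_zero hij (mul_pos (hw i) (hw j)).ne')))

theorem HasConnectedSupport.exists_forall_eq_mul (hconn : HasConnectedSupport A)
    (hA : A.IsSymm) (hA₀ : ∀ i j, 0 ≤ A i j) (hw : ∀ i, 0 < w i) {y : ι → K}
    (hy : weightedLaplacian A w *ᵥ y = 0) : ∃ c, ∀ i, A i ≠ 0 → y i = c * w i := by
  by_cases hzero : ∃ i, A i ≠ 0
  · obtain ⟨i, hi⟩ := hzero
    refine ⟨y i / w i, fun j hj => ?_⟩
    have hpath : ∀ k, Relation.ReflTransGen (fun i j => A i j ≠ 0) i k → y i / w i = y k / w k :=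
      fun k hk => by
        induction hk with
        | refl => rfl
        | tail _ hedge ih =>
          exact ih.trans (div_eq_div_of_weightedLaplacian_mulVec_eq_zero hA hA₀ hw hy hedge)
    rw [hpath j (hconn i j hi hj), div_mul_cancel₀ _ (hw j).ne']
  · exact ⟨0, fun i hi => (hzero ⟨i, hi⟩).elim⟩

theorem HasConnectedSupport.exists_weightedLaplacian_mulVec_eq (hconn : HasConnectedSupport A)
    (hA : A.IsSymm) (hA₀ : ∀ i j, 0 ≤ A i j) (hw : ∀ i, 0 < w i) {x : ι → K}
    (hx : A *ᵥ w ⬝ᵥ x = 0) :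
    ∃ v, weightedLaplacian A w *ᵥ v = weightedDegree A w * x := by
  refine exists_mulVec_eq_of_forall_dotProduct_eq_zero (isSymm_weightedLaplacian hA w)
    fun y hy => ?_
  obtain ⟨c, hc⟩ := hconn.exists_forall_eq_mul hA hA₀ hw hy
  calc y ⬝ᵥ (weightedDegree A w * x) = c * (A *ᵥ w ⬝ᵥ x) := by
        simp only [dotProduct, Finset.mul_sum, Pi.mul_apply, weightedDegree]
        refine Finset.sum_congr rfl fun i _ => ?_
        by_cases hi : A i = 0
        · simp only [mulVec, hi, zero_dotProduct, zero_div, zero_mul, mul_zero]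
        · have := (hw i).ne'
          rw [hc i hi]
          field_simp
    _ = 0 := by rw [hx, mul_zero]

theorem sq_dotProduct_weightedLaplacian_mulVec_le (hA : A.IsSymm) (hA₀ : ∀ i j, 0 ≤ A i j)
    (hw : ∀ i, 0 < w i) (x y : ι → K) :
    (x ⬝ᵥ weightedLaplacian A w *ᵥ y) ^ 2 ≤
      (x ⬝ᵥ weightedLaplacian A w *ᵥ x) * (y ⬝ᵥ weightedLaplacian A w *ᵥ y) := by
  have h := LinearMap.BilinForm.apply_sq_le_of_symm (toBilin' (weightedLaplacian A w))
    (fun x => by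
      simpa [toBilin'_apply'] using dotProduct_weightedLaplacian_mulVec_nonneg hA hA₀ hw x)
    ⟨fun x y => by
      simpa [toBilin'_apply'] using
        dotProduct_mulVec_comm_of_isSymm (isSymm_weightedLaplacian hA w) x y⟩ x y
  simpa only [toBilin'_apply'] using h

theorem dotProduct_weightedLaplacian_mulVec_le {x v : ι → K}
    (hv : weightedLaplacian A w *ᵥ v = weightedDegree A w * x)
    (hbochner : v ⬝ᵥ A *ᵥ v ≤ ∑ i, (A *ᵥ v) i ^ 2 / weightedDegree A w i) :
    v ⬝ᵥ weightedLaplacian A w *ᵥ v ≤ x ⬝ᵥ (weightedDegree A w * x) := by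
  have hAv : A *ᵥ v = weightedDegree A w * (v - x) := by
    rw [weightedLaplacian_mulVec] at hv
    rw [mul_sub, ← hv, sub_sub_cancel]
  have hsum : ∑ i, (A *ᵥ v) i ^ 2 / weightedDegree A w i =
      (v - x) ⬝ᵥ (weightedDegree A w * (v - x)) := by
    refine Finset.sum_congr rfl fun i _ => ?_
    rw [hAv, Pi.mul_apply, mul_pow, mul_div_right_comm, sq, mul_self_div_self]
    ring
  have hcomm : v ⬝ᵥ (weightedDegree A w * x) = x ⬝ᵥ (weightedDegree A w * v) :=
    Finset.sum_congr rfl fun i _ => by simp only [Pi.mul_apply]; ring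
  rw [hsum, hAv] at hbochner
  simp only [mul_sub, dotProduct_sub, sub_dotProduct] at hbochner
  rw [hv]
  linarith

end WeightedLaplacian

section TrickleDown

variable {ι K : Type*} [Fintype ι] [Field K] [LinearOrder K] [IsStrictOrderedRing K]

theorem HasConnectedSupport.isNegSemidefOnHyperplane {A : Matrix ι ι K} {w : ι → K}
    (hconn : HasConnectedSupport A) (hA : A.IsSymm) (hA₀ : ∀ i j, 0 ≤ A i j) (hw : ∀ i, 0 < w i)
    (hbochner : ∀ x, x ⬝ᵥ A *ᵥ x ≤ ∑ i, (A *ᵥ x) i ^ 2 / weightedDegree A w i) :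
    IsNegSemidefOnHyperplane A := by
  classical
  refine ⟨A *ᵥ w, fun x hx => ?_⟩
  obtain ⟨v, hv⟩ := hconn.exists_weightedLaplacian_mulVec_eq hA hA₀ hw hx
  set e := x ⬝ᵥ (weightedDegree A w * x) with he
  have he₀ : 0 ≤ e := Finset.sum_nonneg fun i _ => by
    have hdeg : 0 ≤ weightedDegree A w i :=
      div_nonneg (mulVec_nonneg hA₀ (fun i => (hw i).le) i) (hw i).le
    rw [Pi.mul_apply, mul_left_comm]
    exact mul_nonneg hdeg (mul_self_nonneg _)
  have hxx := dotProduct_weightedLaplacian_mulVec_nonneg hA hA₀ hw x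
  have hvv : v ⬝ᵥ weightedLaplacian A w *ᵥ v ≤ e :=
    dotProduct_weightedLaplacian_mulVec_le hv (hbochner v)
  have hsq : e * e ≤ (x ⬝ᵥ weightedLaplacian A w *ᵥ x) * e :=
    calc e * e = (x ⬝ᵥ weightedLaplacian A w *ᵥ v) ^ 2 := by rw [hv, sq]
      _ ≤ (x ⬝ᵥ weightedLaplacian A w *ᵥ x) * (v ⬝ᵥ weightedLaplacian A w *ᵥ v) :=
        sq_dotProduct_weightedLaplacian_mulVec_le hA hA₀ hw x v
      _ ≤ (x ⬝ᵥ weightedLaplacian A w *ᵥ x) * e := mul_le_mul_of_nonneg_left hvv hxx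
  have hle : e ≤ x ⬝ᵥ weightedLaplacian A w *ᵥ x := by
    rcases he₀.eq_or_lt with h | h
    · rwa [← h]
    · exact le_of_mul_le_mul_right hsq h
  rwa [weightedLaplacian_mulVec, dotProduct_sub, ← he, le_sub_self_iff] at hle

theorem isNegSemidefOnHyperplane_sum_smul {T : ι → Matrix ι ι K} {w : ι → K}
    (hsymm : ∀ i, (T i).IsSymm) (hswap : ∀ i j, T i j = T j i) (hT₀ : ∀ i j k, 0 ≤ T i j k)
    (hw : ∀ i, 0 < w i) (hconn : HasConnectedSupport (∑ k, w k • T k))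
    (hT : ∀ k, IsNegSemidefOnHyperplane (T k)) :
    IsNegSemidefOnHyperplane (∑ k, w k • T k) := by
  set A := ∑ k, w k • T k with hA
  have hAapply : ∀ i j, A i j = ∑ k, w k * T k i j := fun i j => by
    simp [hA, Matrix.sum_apply]
  have hrow : ∀ k, T k *ᵥ w = A k := fun k => by
    ext j
    rw [hAapply]
    exact Finset.sum_congr rfl fun i _ => by rw [hswap i k, (hsymm k).apply, mul_comm]
  have hA₀ : ∀ i j, 0 ≤ A i j := fun i j => by
    rw [hAapply]
    exact Finset.sum_nonneg fun k _ => mul_nonneg (hw k).le (hT₀ k i j)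
  have hAsymm : A.IsSymm := IsSymm.ext fun i j => by
    simp only [hAapply, (hsymm _).apply]
  refine hconn.isNegSemidefOnHyperplane hAsymm hA₀ hw fun x => ?_
  have hquad : x ⬝ᵥ A *ᵥ x = ∑ k, w k * (x ⬝ᵥ T k *ᵥ x) := by
    simp only [hA, sum_mulVec, smul_mulVec, dotProduct_sum, dotProduct_smul, smul_eq_mul]
  rw [hquad]
  refine Finset.sum_le_sum fun k _ => ?_
  have hww : w ⬝ᵥ T k *ᵥ w = (A *ᵥ w) k := by rw [hrow, dotProduct_comm]; rfl
  have hxw : x ⬝ᵥ T k *ᵥ w = (A *ᵥ x) k := by rw [hrow, dotProduct_comm]; rfl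
  have hAw : 0 ≤ (A *ᵥ w) k := mulVec_nonneg hA₀ (fun i => (hw i).le) k
  rcases hAw.eq_or_lt with h | h
  · have hTk : T k = 0 := by
      ext i j
      have hrow₀ : A k = 0 := row_eq_zero_of_mulVec_eq_zero (hA₀ k) hw h.symm
      exact congr_fun (row_eq_zero_of_mulVec_eq_zero (hT₀ k i) hw
        (by rw [hrow, hrow₀, Pi.zero_apply])) j
    simp [hTk, weightedDegree, ← h]
  · have hcs := (hT k).dotProduct_mulVec_mul_le_sq (hsymm k) x (y := w) (by rw [hww]; exact hAw)
    rw [hww, hxw] at hcs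
    rw [weightedDegree, div_div_eq_mul_div, mul_div_right_comm, mul_comm _ (w k)]
    exact mul_le_mul_of_nonneg_left ((le_div_iff₀ h).2 hcs) (hw k).le

end TrickleDown

section DirDeriv

variable {σ R : Type*} [CommRing R]

/-- The derivative of polynomials in the direction `v`. -/
noncomputable def dirDeriv (v : σ → R) : Derivation R (MvPolynomial σ R) (MvPolynomial σ R) :=
  mkDerivation R fun i => C (v i)

/-- The iterated derivative along the directions `v 0, …, v (k - 1)`. -/
noncomputable def mixedDeriv : {k : ℕ} → (Fin k → σ → R) → Module.End R (MvPolynomial σ R)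
  | 0, _ => 1
  | _ + 1, v => (dirDeriv (v 0)).toLinearMap * mixedDeriv (Fin.tail v)

theorem dirDeriv_comm (v w : σ → R) (p : MvPolynomial σ R) :
    dirDeriv v (dirDeriv w p) = dirDeriv w (dirDeriv v p) := by
  have hcomm : ⁅dirDeriv v, dirDeriv w⁆ = 0 :=
    derivation_ext fun i => by simp [Derivation.commutator_apply, dirDeriv, mkDerivation_X]
  rw [← sub_eq_zero, ← Derivation.commutator_apply, hcomm, Derivation.zero_apply]

theorem pderiv_eq_dirDeriv [DecidableEq σ] (i : σ) :
    pderiv i = dirDeriv (Pi.single i (1 : R)) :=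
  derivation_ext fun j => by
    rw [pderiv_X, dirDeriv, mkDerivation_X, Pi.single_apply, Pi.single_apply, apply_ite C, C_1, C_0]

theorem pderiv_comm (i j : σ) (p : MvPolynomial σ R) :
    pderiv i (pderiv j p) = pderiv j (pderiv i p) := by
  classical rw [pderiv_eq_dirDeriv i, pderiv_eq_dirDeriv j, dirDeriv_comm]

theorem mixedDeriv_succ {k : ℕ} (v : Fin (k + 1) → σ → R) (p : MvPolynomial σ R) :
    mixedDeriv v p = dirDeriv (v 0) (mixedDeriv (Fin.tail v) p) :=
  rfl

theorem dirDeriv_mixedDeriv {k : ℕ} (w : σ → R) (v : Fin k → σ → R) (p : MvPolynomial σ R) :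
    dirDeriv w (mixedDeriv v p) = mixedDeriv v (dirDeriv w p) := by
  induction k with
  | zero => rfl
  | succ k ih => rw [mixedDeriv_succ, dirDeriv_comm, ih, ← mixedDeriv_succ]

theorem pderiv_mixedDeriv {k : ℕ} (i : σ) (v : Fin k → σ → R) (p : MvPolynomial σ R) :
    pderiv i (mixedDeriv v p) = mixedDeriv v (pderiv i p) := by
  classical rw [pderiv_eq_dirDeriv, dirDeriv_mixedDeriv]

theorem dirDeriv_apply [Fintype σ] (v : σ → R) (p : MvPolynomial σ R) :
    dirDeriv v p = ∑ i, v i • pderiv i p := by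
  classical
  have hsum : ∀ q, (∑ i, v i • pderiv i : Derivation R _ (MvPolynomial σ R)) q =
      ∑ i, v i • pderiv i q := fun q =>
    (congr_fun (map_sum Derivation.coeFnAddMonoidHom (fun i => v i • pderiv i) _) q).trans
      (Finset.sum_apply ..)
  have h : dirDeriv v = ∑ i, v i • pderiv i := derivation_ext fun j => by
    simp [hsum, dirDeriv, pderiv_X, Pi.single_apply, mkDerivation_X, smul_eq_C_mul]
  rw [h, hsum]

theorem coeff_dirDeriv [Fintype σ] (v : σ → R) (p : MvPolynomial σ R) (m : σ →₀ ℕ) :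
    coeff m (dirDeriv v p) = ∑ i, v i * coeff m (pderiv i p) := by
  simp only [dirDeriv_apply, coeff_sum, coeff_smul, smul_eq_mul]

variable [LinearOrder R] [IsStrictOrderedRing R]

theorem coeff_pderiv_nonneg {p : MvPolynomial σ R} (hp : ∀ m, 0 ≤ coeff m p) (i : σ)
    (m : σ →₀ ℕ) : 0 ≤ coeff m (pderiv i p) := by
  rw [coeff_pderiv]
  exact mul_nonneg (hp _) (by positivity)

theorem coeff_mixedDeriv_nonneg [Finite σ] {k : ℕ} {v : Fin k → σ → R} (hv : ∀ i j, 0 ≤ v i j)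
    {p : MvPolynomial σ R} (hp : ∀ m, 0 ≤ coeff m p) (m : σ →₀ ℕ) :
    0 ≤ coeff m (mixedDeriv v p) := by
  cases nonempty_fintype σ
  induction k generalizing m with
  | zero => exact hp m
  | succ k ih =>
    rw [mixedDeriv_succ, coeff_dirDeriv]
    exact Finset.sum_nonneg fun i _ => mul_nonneg (hv 0 i)
      (coeff_pderiv_nonneg (ih fun i => hv i.succ) i m)

theorem dirDeriv_ne_zero [Finite σ] {v : σ → R} (hv : ∀ i, 0 < v i) {p : MvPolynomial σ R}
    (hp : p ≠ 0) (hp₀ : ∀ m, 0 ≤ coeff m p) {d : ℕ} (hd : p.IsHomogeneous (d + 1)) :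
    dirDeriv v p ≠ 0 := by
  cases nonempty_fintype σ
  intro h
  have hpderiv : ∀ i, pderiv i p = 0 := fun i => by
    ext m
    have hsum : ∑ i, v i * coeff m (pderiv i p) = 0 := by rw [← coeff_dirDeriv, h, coeff_zero]
    have hi := (Finset.sum_eq_zero_iff_of_nonneg fun i _ =>
      mul_nonneg (hv i).le (coeff_pderiv_nonneg hp₀ i m)).1 hsum i (Finset.mem_univ i)
    exact (mul_eq_zero.1 hi).resolve_left (hv i).ne'
  have heuler : (d + 1) • p = 0 := by
    simp only [← hd.sum_X_mul_pderiv, hpderiv, mul_zero, Finset.sum_const_zero]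
  exact hp ((smul_eq_zero.1 heuler).resolve_left d.succ_ne_zero)

theorem eval_zero_mixedDeriv_ne_zero [Finite σ] {k : ℕ} {v : Fin k → σ → R} (hv : ∀ i j, 0 < v i j)
    {p : MvPolynomial σ R} (hp : p ≠ 0) (hp₀ : ∀ m, 0 ≤ coeff m p) (hk : p.IsHomogeneous k) :
    eval 0 (mixedDeriv v p) ≠ 0 := by
  cases nonempty_fintype σ
  induction k generalizing p with
  | zero =>
    rw [← totalDegree_zero_iff_isHomogeneous, totalDegree_eq_zero_iff_eq_C] at hk
    rw [hk] at hp ⊢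
    simpa [mixedDeriv] using hp
  | succ k ih =>
    rw [mixedDeriv_succ, dirDeriv_mixedDeriv]
    refine ih (fun i => hv i.succ) (dirDeriv_ne_zero (hv 0) hp hp₀ hk) (fun m => ?_) ?_
    · rw [coeff_dirDeriv]
      exact Finset.sum_nonneg fun i _ => mul_nonneg (hv 0 i).le (coeff_pderiv_nonneg hp₀ i m)
    · rw [dirDeriv_apply]
      exact IsHomogeneous.sum _ _ _ fun i _ => by
        rw [smul_eq_C_mul]
        exact hk.pderiv.C_mul _

end DirDeriv

section PolyHessian

variable {n : ℕ}

theorem polyHessian_apply (g : MvPolynomial (Fin n) ℝ) (z : Fin n → ℝ) (i j : Fin n) :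
    polyHessian g z i j = eval z (pderiv i (pderiv j g)) :=
  rfl

theorem isSymm_polyHessian (g : MvPolynomial (Fin n) ℝ) (z : Fin n → ℝ) :
    (polyHessian g z).IsSymm :=
  IsSymm.ext fun i j => by rw [polyHessian_apply, polyHessian_apply, pderiv_comm]

theorem polyHessian_pderiv_apply_comm (g : MvPolynomial (Fin n) ℝ) (z : Fin n → ℝ) (i j : Fin n) :
    polyHessian (pderiv i g) z j = polyHessian (pderiv j g) z i := by
  ext k
  rw [polyHessian_apply, polyHessian_apply, pderiv_comm k i, pderiv_comm j i, pderiv_comm k j]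

theorem polyHessian_dirDeriv (w : Fin n → ℝ) (g : MvPolynomial (Fin n) ℝ) (z : Fin n → ℝ) :
    polyHessian (dirDeriv w g) z = ∑ k, w k • polyHessian (pderiv k g) z := by
  ext i j
  simp [polyHessian_apply, dirDeriv_apply, Matrix.sum_apply, smul_eval]

theorem polyHessian_zero_nonneg {g : MvPolynomial (Fin n) ℝ} (hg : ∀ m, 0 ≤ coeff m g)
    (i j : Fin n) : 0 ≤ polyHessian g 0 i j := by
  rw [polyHessian_apply, eval_zero, constantCoeff_eq]
  exact coeff_pderiv_nonneg (coeff_pderiv_nonneg hg j) i 0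

theorem dotProduct_polyHessian_mulVec (g : MvPolynomial (Fin n) ℝ) (z x y : Fin n → ℝ) :
    x ⬝ᵥ polyHessian g z *ᵥ y = eval z (dirDeriv x (dirDeriv y g)) := by
  simp only [dirDeriv_apply, map_sum, Derivation.map_smul, smul_eval, dotProduct, mulVec,
    polyHessian_apply, Finset.mul_sum]
  rw [Finset.sum_comm]
  exact Finset.sum_congr rfl fun i _ => Finset.sum_congr rfl fun j _ => by ring

theorem LorBase.polyHessian_mixedDeriv_ne_zero_iff {k : ℕ} {f : MvPolynomial (Fin n) ℝ}
    (hf : LorBase (k + 2) f) {v : Fin k → Fin n → ℝ} (hv : ∀ i j, 0 < v i j) {i j : Fin n} :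
    polyHessian (mixedDeriv v f) 0 i j ≠ 0 ↔
      ∃ m, coeff (m + Finsupp.single i 1 + Finsupp.single j 1) f ≠ 0 := by
  have hentry : polyHessian (mixedDeriv v f) 0 i j =
      eval 0 (mixedDeriv v (pderiv i (pderiv j f))) := by
    rw [polyHessian_apply, pderiv_mixedDeriv, pderiv_mixedDeriv]
  have hpderiv : pderiv i (pderiv j f) ≠ 0 ↔
      ∃ m, coeff (m + Finsupp.single i 1 + Finsupp.single j 1) f ≠ 0 := by
    rw [ne_zero_iff]
    refine exists_congr fun m => ?_
    have h1 : (m i : ℝ) + 1 ≠ 0 := by positivity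
    have h2 : (((m + Finsupp.single i 1 : Fin n →₀ ℕ) j : ℕ) : ℝ) + 1 ≠ 0 := by positivity
    rw [coeff_pderiv, coeff_pderiv, mul_ne_zero_iff_right h1, mul_ne_zero_iff_right h2]
  rw [hentry, ← hpderiv]
  refine ⟨fun h h0 => h (by rw [h0, map_zero, map_zero]), fun h => ?_⟩
  exact eval_zero_mixedDeriv_ne_zero hv h
    (coeff_pderiv_nonneg (coeff_pderiv_nonneg hf.2.1 j) i) hf.1.pderiv.pderiv

theorem LorBase.hasConnectedSupport_polyHessian_mixedDeriv {k : ℕ} {f : MvPolynomial (Fin n) ℝ}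
    (hf : LorBase (k + 2) f) {v : Fin k → Fin n → ℝ} (hv : ∀ i j, 0 < v i j) :
    HasConnectedSupport (polyHessian (mixedDeriv v f) 0) := by
  intro i j hi hj
  obtain ⟨a, hia⟩ := Function.ne_iff.1 hi
  obtain ⟨b, hjb⟩ := Function.ne_iff.1 hj
  obtain ⟨m, hα⟩ := (hf.polyHessian_mixedDeriv_ne_zero_iff hv).1 hia
  obtain ⟨m', hβ⟩ := (hf.polyHessian_mixedDeriv_ne_zero_iff hv).1 hjb
  set β := m' + Finsupp.single j 1 + Finsupp.single b 1 with hβ_def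
  have hto_j : ∀ p, β p ≠ 0 →
      Relation.ReflTransGen (fun i j => polyHessian (mixedDeriv v f) 0 i j ≠ 0) p j := by
    intro p hp
    rcases eq_or_ne p j with rfl | hpj
    · exact .refl
    have hle : Finsupp.single p 1 + Finsupp.single j 1 ≤ β := fun q => by
      simp only [hβ_def, Finsupp.add_apply, Finsupp.single_apply] at hp ⊢
      grind
    exact .single ((hf.polyHessian_mixedDeriv_ne_zero_iff hv).2
      ⟨β - (Finsupp.single p 1 + Finsupp.single j 1), by
        rwa [add_assoc, tsub_add_cancel_of_le hle]⟩)
  by_cases hβi : β i = 0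
  · obtain ⟨p, hp, hexchange⟩ := hf.2.2 _ hα _ hβ i (by simp [hβi])
    have hap : polyHessian (mixedDeriv v f) 0 a p ≠ 0 :=
      (hf.polyHessian_mixedDeriv_ne_zero_iff hv).2 ⟨m, by
        rwa [add_right_comm, add_tsub_cancel_right] at hexchange⟩
    exact .head hia (.head hap (hto_j p (by omega)))
  · exact hto_j i hβi

end PolyHessian

section Analysis

variable {σ 𝕜 : Type*} [NontriviallyNormedField 𝕜]

theorem contDiff_eval [Fintype σ] {m : WithTop ℕ∞} (p : MvPolynomial σ 𝕜) :
    ContDiff 𝕜 m fun z : σ → 𝕜 => eval z p := by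
  induction p using MvPolynomial.induction_on with
  | C a => simpa using contDiff_const
  | add p q hp hq => simpa using hp.add hq
  | mul_X p i hp => simpa using hp.mul (contDiff_apply 𝕜 𝕜 i)

theorem fderiv_eval [Finite σ] (p : MvPolynomial σ 𝕜) (z v : σ → 𝕜) :
    fderiv 𝕜 (fun z => eval z p) z v = eval z (dirDeriv v p) := by
  cases nonempty_fintype σ
  have hdiff : ∀ p : MvPolynomial σ 𝕜, DifferentiableAt 𝕜 (fun z : σ → 𝕜 => eval z p) z :=
    fun p => (contDiff_eval p).differentiable one_ne_zero z
  induction p using MvPolynomial.induction_on with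
  | C a => simp [dirDeriv]
  | add p q hp hq =>
    simp only [map_add, fderiv_fun_add (hdiff p) (hdiff q), _root_.add_apply, hp, hq]
  | mul_X p i hp =>
    have hX : fderiv 𝕜 (fun z : σ → 𝕜 => z i) z v = v i := by
      rw [(hasFDerivAt_apply i z).fderiv, ContinuousLinearMap.proj_apply]
    have hXdiff : DifferentiableAt 𝕜 (fun z : σ → 𝕜 => z i) z := differentiableAt_apply i z
    simp only [map_mul, eval_X, fderiv_fun_mul (hdiff p) hXdiff, _root_.add_apply,
      _root_.smul_apply, hp, hX, Derivation.leibniz, dirDeriv, mkDerivation_X,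
      smul_eq_mul, map_add, eval_C]

theorem iteratedFDeriv_eval [Fintype σ] {k : ℕ} (p : MvPolynomial σ 𝕜) (z : σ → 𝕜)
    (v : Fin k → σ → 𝕜) :
    iteratedFDeriv 𝕜 k (fun z => eval z p) z v = eval z (mixedDeriv v p) := by
  induction k generalizing z with
  | zero => rfl
  | succ k ih =>
    have hdiff : DifferentiableAt 𝕜 (iteratedFDeriv 𝕜 k fun z => eval z p) z :=
      (contDiff_eval (m := (k + 1 : ℕ)) p).differentiable_iteratedFDeriv
        (mod_cast k.lt_succ_self) z
    rw [iteratedFDeriv_succ_apply_left, ← fderiv_continuousMultilinear_apply_const_apply hdiff]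
    simp only [ih, fderiv_eval, mixedDeriv_succ]

theorem continuous_eval_mixedDeriv [Finite σ] {k : ℕ} (p : MvPolynomial σ 𝕜) (z : σ → 𝕜) :
    Continuous fun v : Fin k → σ → 𝕜 => eval z (mixedDeriv v p) := by
  cases nonempty_fintype σ
  have hcont := (iteratedFDeriv 𝕜 k (fun z => eval z p) z).coe_continuous
  rwa [funext (iteratedFDeriv_eval p z)] at hcont

end Analysis

section Lorentzian

variable {n : ℕ} {f : MvPolynomial (Fin n) ℝ}

theorem polarForm_eq_eval_mixedDeriv {d : ℕ} (f : MvPolynomial (Fin n) ℝ) (v : Fin d → Fin n → ℝ) :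
    polarForm d f v = (d.factorial : ℝ)⁻¹ * eval 0 (mixedDeriv v f) := by
  let L : (Fin d → ℝ) →L[ℝ] Fin n → ℝ := (Matrix.vecMulLinear (of v)).toContinuousLinearMap
  have hL : (fun x : Fin d → ℝ => eval (fun j => ∑ i, x i * v i j) f) = (fun z => eval z f) ∘ L :=
    rfl
  have hv : ∀ i, L (Pi.single i 1) = v i := fun i => single_one_vecMul i (of v)
  rw [polarForm, hL, L.iteratedFDeriv_comp_right (contDiff_eval f) 0 (i := d) (n := ⊤) le_top]
  simp [hv, iteratedFDeriv_eval]

theorem polarForm_add_two {k : ℕ} (f : MvPolynomial (Fin n) ℝ) (v : Fin (k + 2) → Fin n → ℝ) :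
    polarForm (k + 2) f v = ((k + 2).factorial : ℝ)⁻¹ *
      (v 0 ⬝ᵥ polyHessian (mixedDeriv (fun i => v i.succ.succ) f) 0 *ᵥ v 1) := by
  rw [polarForm_eq_eval_mixedDeriv, dotProduct_polyHessian_mulVec]
  rfl

theorem IsLorentzian.lorBase {d : ℕ} (hf : IsLorentzian d f) : LorBase d f := by
  match d, hf with
  | 0, hf | 1, hf => exact hf
  | 2, hf | _ + 3, hf => exact hf.1

theorem IsLorentzian.isNegSemidefOnHyperplane_polyHessian_mixedDeriv {k : ℕ}
    (hf : IsLorentzian (k + 2) f) {v : Fin k → Fin n → ℝ} (hv : ∀ i j, 0 < v i j) :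
    IsNegSemidefOnHyperplane (polyHessian (mixedDeriv v f) 0) := by
  induction k generalizing f with
  | zero => exact hf.2.isNegSemidefOnHyperplane
  | succ k ih =>
    have hconn := hf.lorBase.hasConnectedSupport_polyHessian_mixedDeriv hv
    rw [mixedDeriv_succ, polyHessian_dirDeriv] at hconn ⊢
    refine isNegSemidefOnHyperplane_sum_smul (fun i => isSymm_polyHessian _ _)
      (polyHessian_pderiv_apply_comm _ _) (fun i => polyHessian_zero_nonneg ?_) (hv 0) hconn
      fun i => ?_
    · exact coeff_pderiv_nonneg
        (coeff_mixedDeriv_nonneg (fun i j => (hv i.succ j).le) hf.lorBase.2.1) i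
    · rw [pderiv_mixedDeriv]
      exact ih (hf.2 i) fun i => hv i.succ

theorem IsLorentzian.dotProduct_mulVec_mul_le_sq {k : ℕ} (hf : IsLorentzian (k + 2) f)
    {v : Fin k → Fin n → ℝ} (hv : ∀ i j, 0 ≤ v i j) (x : Fin n → ℝ)
    {y : Fin n → ℝ} (hy : ∀ j, 0 ≤ y j) :
    (x ⬝ᵥ polyHessian (mixedDeriv v f) 0 *ᵥ x) * (y ⬝ᵥ polyHessian (mixedDeriv v f) 0 *ᵥ y) ≤
      (x ⬝ᵥ polyHessian (mixedDeriv v f) 0 *ᵥ y) ^ 2 := by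
  have hcont : ∀ x y : Fin n → ℝ, Continuous fun v : Fin k → Fin n → ℝ =>
      x ⬝ᵥ polyHessian (mixedDeriv v f) 0 *ᵥ y := fun x y => by
    simpa only [dotProduct_polyHessian_mulVec, dirDeriv_mixedDeriv] using
      continuous_eval_mixedDeriv _ 0
  have hv_mem : v ∈ closure (Set.univ.pi fun _ => Set.univ.pi fun _ => Set.Ioi 0) := by
    simpa only [closure_pi_set, closure_Ioi, Set.mem_univ_pi, Set.mem_Ici] using hv
  refine closure_minimal (fun u hu => ?_)
    (isClosed_le ((hcont x x).mul (hcont y y)) ((hcont x y).pow 2)) hv_mem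
  have hu : ∀ i j, 0 < u i j := by simpa only [Set.mem_univ_pi, Set.mem_Ioi] using hu
  have hnonneg := polyHessian_zero_nonneg
    (coeff_mixedDeriv_nonneg (fun i j => (hu i j).le) hf.lorBase.2.1)
  exact (hf.isNegSemidefOnHyperplane_polyHessian_mixedDeriv hu).dotProduct_mulVec_mul_le_sq
    (isSymm_polyHessian _ _) x
    (Finset.sum_nonneg fun i _ => mul_nonneg (hy i) (mulVec_nonneg hnonneg hy i))

end Lorentzian

theorem stmt7 {n d : ℕ} (hd : 2 ≤ d) (f : MvPolynomial (Fin n) ℝ)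
    (hf : IsLorentzian d f) (v : Fin d → Fin n → ℝ)
    (hv : ∀ i : Fin d, i ≠ ⟨0, by omega⟩ → ∀ j, 0 ≤ v i j) :
    polarForm d f (Function.update v ⟨1, by omega⟩ (v ⟨0, by omega⟩)) *
        polarForm d f (Function.update v ⟨0, by omega⟩ (v ⟨1, by omega⟩)) ≤
      (polarForm d f v) ^ 2 := by
  obtain ⟨k, rfl⟩ := Nat.exists_eq_add_of_le' hd
  set H := polyHessian (mixedDeriv (fun i : Fin k => v i.succ.succ) f) 0
  set c : ℝ := ((k + 2).factorial : ℝ)⁻¹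
  have hcs : (v 0 ⬝ᵥ H *ᵥ v 0) * (v 1 ⬝ᵥ H *ᵥ v 1) ≤ (v 0 ⬝ᵥ H *ᵥ v 1) ^ 2 :=
    hf.dotProduct_mulVec_mul_le_sq (fun i => hv _ (Fin.succ_ne_zero _)) (v 0) (hv 1 one_ne_zero)
  have h00 : polarForm (k + 2) f (Function.update v 1 (v 0)) = c * (v 0 ⬝ᵥ H *ᵥ v 0) := by
    rw [polarForm_add_two]
    simp only [Function.update_self, Function.update_of_ne, ne_eq, zero_ne_one,
      Fin.succ_succ_ne_one, not_false_eq_true, H, c]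
  have h11 : polarForm (k + 2) f (Function.update v 0 (v 1)) = c * (v 1 ⬝ᵥ H *ᵥ v 1) := by
    rw [polarForm_add_two]
    simp only [Function.update_self, Function.update_of_ne, ne_eq, one_ne_zero,
      Fin.succ_ne_zero, not_false_eq_true, H, c]
  have h01 : polarForm (k + 2) f v = c * (v 0 ⬝ᵥ H *ᵥ v 1) := polarForm_add_two f v
  calc _ = c ^ 2 * ((v 0 ⬝ᵥ H *ᵥ v 0) * (v 1 ⬝ᵥ H *ᵥ v 1)) :=
        (congr_arg₂ (· * ·) h00 h11).trans (by ring)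
    _ ≤ c ^ 2 * (v 0 ⬝ᵥ H *ᵥ v 1) ^ 2 := mul_le_mul_of_nonneg_left hcs (sq_nonneg c)
    _ = _ := by rw [h01, mul_pow]
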